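/- Let A be an n × n real matrix, B an n × m real matrix, T ≥ 1, and let R be a (Tm) × (Tm) symmetric positive semidefinite real matrix with m × m blocks R_{ij}, i, j ∈ {1,…,T}. For each t ∈ {1,…,T} define R^X_t := Σ_{i=1}^{t} Σ_{j=1}^{t} A^{t−i} B R_{ij} Bᵀ (A^{t−j})ᵀ. If for every t ∈ {1,…,T} the cross terms satisfy Σ_{i=1}^{t} Σ_{j=i+1}^{t} tr( Bᵀ (A^{t−j})ᵀ A^{t−i} B R_{ij} ) ≥ 0, then Σ_{t=1}^{T} tr( R^X_t ) ≥ λ_min(BᵀB) · Σ_{t=1}^{T} tr( R_{tt} ). -/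

import Mathlib

/-!
Write `c t i j = tr (Bᵀ (A^{t-j})ᵀ A^{t-i} B R_{ij})`, so that cyclicity of the trace gives
`tr (RX t) = ∑_{i,j ≤ t} c t i j`. Since `R` is symmetric, `c t i j = c t j i`, hence the double sum
is its diagonal plus twice the cross terms, which are nonnegative by assumption. Every diagonal term
is the trace of the positive semidefinite matrix `(A^{t-i} B) R_{ii} (A^{t-i} B)ᵀ`, so the diagonal
is at least its `i = t` term `tr (Bᵀ B R_{tt})`, and this is at least `λ_min(Bᵀ B) tr R_{tt}` by
diagonalizing `Bᵀ B` (`iInf_eigenvalues_mul_trace_le`).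
-/

open scoped Matrix

/-- In an eigenbasis `U` of `M`, `tr (M P)` is the sum of the eigenvalues of `M` weighted by the
nonnegative diagonal entries of `Uᴴ P U`, which add up to `tr P`. For an empty index type both sides
vanish. -/
lemma iInf_eigenvalues_mul_trace_le {m : ℕ} {M P : Matrix (Fin m) (Fin m) ℝ}
    (hM : M.IsHermitian) (hP : P.PosSemidef) :
    (⨅ i, hM.eigenvalues i) * P.trace ≤ (M * P).trace := by
  set U : Matrix (Fin m) (Fin m) ℝ := (hM.eigenvectorUnitary : Matrix (Fin m) (Fin m) ℝ) with hU
  have hUU : U * Uᴴ = 1 := Unitary.mul_star_self_of_mem hM.eigenvectorUnitary.2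
  have hspec : M = U * Matrix.diagonal hM.eigenvalues * Uᴴ := by
    have h := hM.spectral_theorem
    rw [Unitary.conjStarAlgAut_apply] at h
    exact h
  set Q : Matrix (Fin m) (Fin m) ℝ := Uᴴ * P * U with hQ
  have hQpsd : Q.PosSemidef := hP.conjTranspose_mul_mul_same U
  have htr : P.trace = Q.trace := by
    rw [hQ, Matrix.trace_mul_comm, ← Matrix.mul_assoc, hUU, Matrix.one_mul]
  have hMP : (M * P).trace = ∑ i, hM.eigenvalues i * Q i i := by
    have h1 : (M * P).trace = (Matrix.diagonal hM.eigenvalues * Q).trace := by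
      conv_lhs => rw [hspec]
      rw [hQ, Matrix.mul_assoc, Matrix.mul_assoc, Matrix.trace_mul_comm]
      simp only [Matrix.mul_assoc]
    rw [h1]
    simp [Matrix.trace, Matrix.diagonal_mul]
  rw [hMP, htr, Matrix.trace, Finset.mul_sum]
  refine Finset.sum_le_sum fun i _ => ?_
  exact mul_le_mul_of_nonneg_right (ciInf_le (Set.finite_range _).bddBelow i) hQpsd.diag_nonneg

/-- A symmetric double sum over `{i ≤ t}²` is its diagonal plus twice its strict upper triangle. -/
lemma sum_sum_eq_diag_add_two_mul_upper {T : ℕ} (t : Fin T) (c : Fin T → Fin T → ℝ)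
    (hc : ∀ i j, c i j = c j i) :
    ∑ i ∈ Finset.univ.filter (fun i : Fin T => i ≤ t),
        ∑ j ∈ Finset.univ.filter (fun j : Fin T => j ≤ t), c i j
      = ∑ i ∈ Finset.univ.filter (fun i : Fin T => i ≤ t), c i i
        + 2 * ∑ i ∈ Finset.univ.filter (fun i : Fin T => i ≤ t),
            ∑ j ∈ Finset.univ.filter (fun j : Fin T => i < j ∧ j ≤ t), c i j := by
  have hupper : ∀ i, ∑ j ∈ Finset.univ.filter (fun j : Fin T => i < j ∧ j ≤ t), c i j
      = ∑ j ∈ Finset.univ.filter (fun j : Fin T => j ≤ t), if i < j then c i j else 0 := by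
    intro i
    rw [← Finset.sum_filter, Finset.filter_filter]
    simp only [and_comm]
  have hswap : ∑ i ∈ Finset.univ.filter (fun i : Fin T => i ≤ t),
        ∑ j ∈ Finset.univ.filter (fun j : Fin T => j ≤ t), (if i < j then c i j else 0)
      = ∑ i ∈ Finset.univ.filter (fun i : Fin T => i ≤ t),
        ∑ j ∈ Finset.univ.filter (fun j : Fin T => j ≤ t), (if j < i then c i j else 0) := by
    rw [Finset.sum_comm]
    refine Finset.sum_congr rfl fun i _ => Finset.sum_congr rfl fun j _ => ?_
    rw [hc]
  simp only [hupper]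
  rw [two_mul]
  nth_rewrite 2 [hswap]
  rw [← Finset.sum_add_distrib, ← Finset.sum_add_distrib]
  refine Finset.sum_congr rfl fun i hi => ?_
  have hdiag : c i i = ∑ j ∈ Finset.univ.filter (fun j : Fin T => j ≤ t),
      if i = j then c i j else 0 := by
    rw [Finset.sum_ite_eq, if_pos hi]
  rw [hdiag, ← Finset.sum_add_distrib, ← Finset.sum_add_distrib]
  refine Finset.sum_congr rfl fun j _ => ?_
  rcases lt_trichotomy i j with h | h | h
  · simp [h, h.ne, h.not_gt]
  · simp [h]
  · simp [h, h.ne', h.not_gt]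

/-- Deterministic core of the input-to-state distortion bound. With conditional input
cross-covariance blocks `Rblk i j` of a PSD `(Tm) × (Tm)` matrix `R`, conditional state
covariances `RX t = Σ_{i≤t} Σ_{j≤t} A^{t-i} B (Rblk i j) Bᵀ (A^{t-j})ᵀ` (0-indexed), and
nonnegative cross terms, one has
`Σ_t tr(RX t) ≥ λ_min(BᵀB) Σ_t tr(Rblk t t)`. -/
theorem stmt19 {n m : ℕ} (T : ℕ) (hT : 1 ≤ T)
    (A : Matrix (Fin n) (Fin n) ℝ) (B : Matrix (Fin n) (Fin m) ℝ)
    (R : Matrix (Fin T × Fin m) (Fin T × Fin m) ℝ) (hR : R.PosSemidef)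
    (Rblk : Fin T → Fin T → Matrix (Fin m) (Fin m) ℝ)
    (hblk : ∀ i j a b, Rblk i j a b = R (i, a) (j, b))
    (RX : Fin T → Matrix (Fin n) (Fin n) ℝ)
    (hRX : ∀ t : Fin T, RX t
      = ∑ i ∈ Finset.univ.filter (fun i : Fin T => i ≤ t),
        ∑ j ∈ Finset.univ.filter (fun j : Fin T => j ≤ t),
          A ^ ((t : ℕ) - (i : ℕ)) * B * Rblk i j * Bᵀ * (A ^ ((t : ℕ) - (j : ℕ)))ᵀ)
    (hH : (Bᵀ * B).IsHermitian)
    (hcross : ∀ t : Fin T,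
      0 ≤ ∑ i ∈ Finset.univ.filter (fun i : Fin T => i ≤ t),
          ∑ j ∈ Finset.univ.filter (fun j : Fin T => i < j ∧ j ≤ t),
            Matrix.trace (Bᵀ * (A ^ ((t : ℕ) - (j : ℕ)))ᵀ * A ^ ((t : ℕ) - (i : ℕ)) * B
              * Rblk i j)) :
    (⨅ i, hH.eigenvalues i) * ∑ t : Fin T, Matrix.trace (Rblk t t)
      ≤ ∑ t : Fin T, Matrix.trace (RX t) := by
  have hsymm : ∀ i j, (Rblk i j)ᵀ = Rblk j i := by
    intro i j
    ext a b
    rw [Matrix.transpose_apply, hblk, hblk]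
    simpa using hR.isHermitian.apply (j, a) (i, b)
  have hpsd : ∀ i, (Rblk i i).PosSemidef := by
    intro i
    have h : Rblk i i = R.submatrix (fun a => (i, a)) (fun a => (i, a)) := by
      ext a b
      exact hblk i i a b
    rw [h]
    exact hR.submatrix _
  rw [Finset.mul_sum]
  refine Finset.sum_le_sum fun t _ => ?_
  set c : Fin T → Fin T → ℝ := fun i j =>
    Matrix.trace (Bᵀ * (A ^ ((t : ℕ) - (j : ℕ)))ᵀ * A ^ ((t : ℕ) - (i : ℕ)) * B * Rblk i j)
    with hc
  have hcyc : ∀ i j : Fin T, Matrix.trace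
      (A ^ ((t : ℕ) - (i : ℕ)) * B * Rblk i j * Bᵀ * (A ^ ((t : ℕ) - (j : ℕ)))ᵀ) = c i j := by
    intro i j
    rw [Matrix.mul_assoc _ Bᵀ, Matrix.trace_mul_comm]
    simp only [hc, Matrix.mul_assoc]
  have hcsymm : ∀ i j, c i j = c j i := by
    intro i j
    rw [← hcyc, ← Matrix.trace_transpose, ← hcyc]
    simp only [Matrix.transpose_mul, Matrix.transpose_transpose, hsymm, Matrix.mul_assoc]
  have hdiag : ∀ i, 0 ≤ c i i := by
    intro i
    rw [← hcyc]
    have h := ((hpsd i).mul_mul_conjTranspose_same (A ^ ((t : ℕ) - (i : ℕ)) * B)).trace_nonneg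
    simpa only [Matrix.conjTranspose_eq_transpose_of_trivial, Matrix.transpose_mul,
      Matrix.mul_assoc] using h
  have hlast : (⨅ i, hH.eigenvalues i) * Matrix.trace (Rblk t t) ≤ c t t := by
    have h := iInf_eigenvalues_mul_trace_le hH (hpsd t)
    simpa [hc] using h
  have htrace : Matrix.trace (RX t)
      = ∑ i ∈ Finset.univ.filter (fun i : Fin T => i ≤ t),
        ∑ j ∈ Finset.univ.filter (fun j : Fin T => j ≤ t), c i j := by
    rw [hRX]
    simp only [Matrix.trace_sum, hcyc]
  have hsingle : c t t ≤ ∑ i ∈ Finset.univ.filter (fun i : Fin T => i ≤ t), c i i :=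
    Finset.single_le_sum (f := fun i => c i i) (fun i _ => hdiag i) (by simp)
  rw [htrace, sum_sum_eq_diag_add_two_mul_upper t c hcsymm]
  linarith [hcross t]
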